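/- Combined pointwise identity (reduction of (REI1) to (REI2)): Let p : (0,∞) → ℝ be continuously differentiable and H(ρ) = ρ ∫_1^ρ p(z)/z² dz (so H''(ρ) = p'(ρ)/ρ). Let ρ ≥ 0 and u¹ be real numbers, ρ̃ > 0, ũ¹ ∈ ℝ, and let a, b, A, B ∈ ℝ (playing the roles of ∂_tρ̃, ∂_{x₁}ρ̃, ∂_tũ¹, ∂_{x₁}ũ¹) satisfy the continuity equation a + ũ¹b + ρ̃B = 0 and the momentum equation ρ̃(A + ũ¹B) + p'(ρ̃)b = 0. Then ρ(A + u¹B)(ũ¹ − u¹) + (p(ρ̃) − p(ρ))B + (ρ̃ − ρ)H''(ρ̃)a + (ρ̃ũ¹ − ρu¹)H''(ρ̃)b = −[ρ(ũ¹ − u¹)² + (p(ρ) − p'(ρ̃)(ρ − ρ̃) − p(ρ̃))] B. -/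

import Mathlib

/-!
Two facts combine. Differentiating `H(ρ) = ρ ∫_1^ρ p(z)/z² dz` twice on `(0, ∞)` gives
`H'(ρ) = ∫_1^ρ p(z)/z² dz + p(ρ)/ρ` and then `H''(ρ) = p'(ρ)/ρ`. With `c = H''(ρ̃)`, the
momentum equation divided by `ρ̃` reads `A + ũ¹B + cb = 0`, and the claimed identity is
`ρ(ũ¹ − u¹)` times this equation plus `c(ρ̃ − ρ)` times the continuity equation.
-/

open MeasureTheory Set

/-- The pressure potential `H(ρ) = ρ ∫_1^ρ p(z)/z² dz`. -/
noncomputable def Hfun (p : ℝ → ℝ) (ρ : ℝ) : ℝ := ρ * ∫ z in (1:ℝ)..ρ, p z / z ^ 2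

theorem hasDerivAt_integral_div_sq {p : ℝ → ℝ} (hp : ContinuousOn p (Set.Ioi 0))
    {r : ℝ} (hr : 0 < r) :
    HasDerivAt (fun x => ∫ z in (1:ℝ)..x, p z / z ^ 2) (p r / r ^ 2) r := by
  have hc : ContinuousOn (fun z => p z / z ^ 2) (Set.Ioi 0) :=
    hp.div (by fun_prop) fun z hz => pow_ne_zero 2 (ne_of_gt hz)
  have hsub : Set.uIcc 1 r ⊆ Set.Ioi 0 := fun z hz =>
    lt_of_lt_of_le (lt_min one_pos hr) hz.1
  exact intervalIntegral.integral_hasDerivAt_right (hc.mono hsub).intervalIntegrable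
    (hc.stronglyMeasurableAtFilter isOpen_Ioi r hr)
    (hc.continuousAt (Ioi_mem_nhds hr))

theorem hasDerivAt_Hfun {p : ℝ → ℝ} (hp : ContinuousOn p (Set.Ioi 0)) {r : ℝ} (hr : 0 < r) :
    HasDerivAt (Hfun p) ((∫ z in (1:ℝ)..r, p z / z ^ 2) + p r / r) r := by
  have h := (hasDerivAt_id r).mul (hasDerivAt_integral_div_sq hp hr)
  refine h.congr_deriv ?_
  simp only [id]
  field_simp

theorem deriv_deriv_Hfun {p : ℝ → ℝ} (hp : ContDiffOn ℝ 1 p (Set.Ioi 0)) {r : ℝ}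
    (hr : 0 < r) : deriv (deriv (Hfun p)) r = deriv p r / r := by
  have hcont := hp.continuousOn
  have hpd : HasDerivAt p (deriv p r) r :=
    ((hp.differentiableOn one_ne_zero).differentiableAt (Ioi_mem_nhds hr)).hasDerivAt
  have heq : deriv (Hfun p) =ᶠ[nhds r] fun x => (∫ z in (1:ℝ)..x, p z / z ^ 2) + p x / x := by
    filter_upwards [Ioi_mem_nhds hr] with x hx using (hasDerivAt_Hfun hcont hx).deriv
  have h := (hasDerivAt_integral_div_sq hcont hr).add (hpd.div (hasDerivAt_id r) hr.ne')
  refine heq.deriv_eq.trans (h.deriv.trans ?_)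
  simp only [id]
  field_simp
  ring

/-- Combined pointwise identity reducing (REI1) to (REI2): if `(ρ̃, ũ¹)` solves the
pointwise 1D Euler relations `a + ũ¹b + ρ̃B = 0` and `ρ̃(A + ũ¹B) + p'(ρ̃)b = 0`, then
`ρ(A + u¹B)(ũ¹ − u¹) + (p(ρ̃) − p(ρ))B + (ρ̃ − ρ)H''(ρ̃)a + (ρ̃ũ¹ − ρu¹)H''(ρ̃)b
  = −[ρ(ũ¹ − u¹)² + (p(ρ) − p'(ρ̃)(ρ − ρ̃) − p(ρ̃))]B`. -/
theorem combined_pointwise_identity (p : ℝ → ℝ) (hp : ContDiffOn ℝ 1 p (Set.Ioi 0))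
    (ρ u1 ρt ut1 a b A B : ℝ) (hρ : 0 ≤ ρ) (hρt : 0 < ρt)
    (hcont : a + ut1 * b + ρt * B = 0)
    (hmom : ρt * (A + ut1 * B) + deriv p ρt * b = 0) :
    ρ * (A + u1 * B) * (ut1 - u1) + (p ρt - p ρ) * B
      + (ρt - ρ) * deriv (deriv (Hfun p)) ρt * a
      + (ρt * ut1 - ρ * u1) * deriv (deriv (Hfun p)) ρt * b
      = -(ρ * (ut1 - u1) ^ 2 + (p ρ - deriv p ρt * (ρ - ρt) - p ρt)) * B := by
  rw [deriv_deriv_Hfun hp hρt]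
  obtain ⟨c, hc⟩ : ∃ c, deriv p ρt = c * ρt :=
    ⟨deriv p ρt / ρt, (div_mul_cancel₀ _ hρt.ne').symm⟩
  rw [hc] at hmom ⊢
  rw [mul_div_cancel_right₀ c hρt.ne']
  have hE : A + ut1 * B + c * b = 0 := by
    refine (mul_eq_zero.mp ?_).resolve_left hρt.ne'
    linear_combination hmom
  linear_combination ρ * (ut1 - u1) * hE + c * (ρt - ρ) * hcont
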